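/- Let f : [ω₂]² → [ω₂]^{≤ω} satisfy f{α,β} ⊆ α ∩ β for all pairs. Assume s = (a^s, h^s, i^s) ∈ P_f, a^s = S ∪ E ∪ F with Q ⊆ S, every element of S below every element of E and every element of E below every element of F, E = {γ_0 < γ_1 < … < γ_{k-1}} and F = {γ_{i,0}, γ_{i,1} : i < k}, and moreover: (i) for all i < k, h^s(γ_{i,0}) ∩ h^s(γ_{i,1}) = ⋃{h^s(ν) : ν ∈ Q ∪ E}; (ii) for all i < k and all ξ ∈ S, f{ξ,γ_i} = f{ξ,γ_{i,0}} = f{ξ,γ_{i,1}}. Then there is a condition r = (a^r, h^r, i^r) ∈ P_f with a^r = S ∪ E such that: (a) r ≤ s↾S; (b) r ≤ s↾(Q ∪ E); (c) S \ ⋃{h^s(ν) : ν ∈ Q ∪ E} ⊆ h^r(γ_0); (d) s↾(S ∪ E) ≺ r. -/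

import Mathlib

attribute [local instance] Classical.propDecidable

noncomputable section

/-- The second uncountable cardinal ω₂, as an ordinal. -/
def omega2 : Ordinal := (Cardinal.aleph 2).ord

/-- The operation `x * y` on nonempty finite sets of ordinals with `max x ≠ max y`:
`x \ y` if `max x ∈ y`, `y \ x` if `max y ∈ x`, and `x ∩ y` otherwise. -/
def ostar (x y : Finset Ordinal) : Finset Ordinal :=
  if ∃ m ∈ y, x.max = (m : WithBot Ordinal) then x \ y
  else if ∃ m ∈ x, y.max = (m : WithBot Ordinal) then y \ x
  else x ∩ y

/-- The conditions of the poset `P_f`: triples `(a, h, i)` where `a` is a finite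
subset of ω₂, `h : a → 𝒫(a)` with `max (h ξ) = ξ`, `i : [a]² → 𝒫(a)` with
`i {ξ,η} ⊆ f {ξ,η}`, and `h ξ * h η ⊆ ⋃ {h ν : ν ∈ i {ξ,η}}`. -/
structure PfCond (f : Ordinal → Ordinal → Set Ordinal) where
  a : Finset Ordinal
  h : Ordinal → Finset Ordinal
  i : Ordinal → Ordinal → Finset Ordinal
  a_lt : ∀ ξ ∈ a, ξ < omega2
  h_sub : ∀ ξ ∈ a, h ξ ⊆ a
  h_mem : ∀ ξ ∈ a, ξ ∈ h ξ
  h_le : ∀ ξ ∈ a, ∀ η ∈ h ξ, η ≤ ξ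
  i_symm : ∀ ξ η, i ξ η = i η ξ
  i_sub_f : ∀ ξ ∈ a, ∀ η ∈ a, ξ ≠ η → ∀ ν ∈ i ξ η, ν ∈ f ξ η
  i_sub_a : ∀ ξ ∈ a, ∀ η ∈ a, ξ ≠ η → i ξ η ⊆ a
  star_cond : ∀ ξ ∈ a, ∀ η ∈ a, ξ ≠ η → ostar (h ξ) (h η) ⊆ (i ξ η).biUnion h

/-- The order on `P_f`: `p ≤ q` iff `a^p ⊇ a^q`, `h^p(ξ) ∩ a^q = h^q(ξ)` for
`ξ ∈ a^q`, and `i^p` extends `i^q`. -/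
def PfLe {f : Ordinal → Ordinal → Set Ordinal} (p q : PfCond f) : Prop :=
  q.a ⊆ p.a ∧ (∀ ξ ∈ q.a, p.h ξ ∩ q.a = q.h ξ) ∧
    ∀ ξ ∈ q.a, ∀ η ∈ q.a, ξ ≠ η → p.i ξ η = q.i ξ η

/-- The extended order on restrictions of conditions:
`p↾bp ≤ q↾bq` iff `bp ⊇ bq`, `h^p(ξ) ∩ bq = h^q(ξ) ∩ bq` for each `ξ ∈ bq`,
and `i^p` and `i^q` agree on pairs from `bq`. -/
def RestLe {f : Ordinal → Ordinal → Set Ordinal} (p : PfCond f) (bp : Finset Ordinal)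
    (q : PfCond f) (bq : Finset Ordinal) : Prop :=
  bq ⊆ bp ∧ (∀ ξ ∈ bq, p.h ξ ∩ bq = q.h ξ ∩ bq) ∧
    ∀ ξ ∈ bq, ∀ η ∈ bq, ξ ≠ η → p.i ξ η = q.i ξ η

/-- `s↾b ≺ r` : the domains agree and for every `α` in the domain and every
`c ⊆ b ∩ α` we have `U^{s↾b}(α,c) ⊆ U^r(α,c)`. -/
def PrecRest {f : Ordinal → Ordinal → Set Ordinal} (s : PfCond f) (b : Finset Ordinal)
    (r : PfCond f) : Prop :=
  b = r.a ∧ ∀ α ∈ b, ∀ c : Finset Ordinal, (∀ ν ∈ c, ν ∈ b ∧ ν < α) →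
    (s.h α ∩ b) \ c.biUnion (fun ν => s.h ν ∩ b) ⊆ r.h α \ c.biUnion r.h

theorem Finset.max_eq_of_mem_of_forall_le {x : Finset Ordinal} {ξ : Ordinal} (hx : ξ ∈ x)
    (hxle : ∀ ζ ∈ x, ζ ≤ ξ) : x.max = (ξ : WithBot Ordinal) :=
  le_antisymm (Finset.max_le fun ζ hζ => WithBot.coe_le_coe.2 (hxle ζ hζ)) (Finset.le_max hx)

/-- The value of `ostar` on sets with maxima `ξ < η`. -/
theorem ostar_eq_of_lt {x y : Finset Ordinal} {ξ η : Ordinal} (hx : ξ ∈ x)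
    (hxle : ∀ ζ ∈ x, ζ ≤ ξ) (hy : η ∈ y) (hyle : ∀ ζ ∈ y, ζ ≤ η) (hlt : ξ < η) :
    ostar x y = if ξ ∈ y then x \ y else x ∩ y := by
  have hxmax := Finset.max_eq_of_mem_of_forall_le hx hxle
  have hymax := Finset.max_eq_of_mem_of_forall_le hy hyle
  have hη : η ∉ x := fun h => absurd (hxle η h) (not_le.2 hlt)
  have h₁ : (∃ m ∈ y, x.max = (m : WithBot Ordinal)) ↔ ξ ∈ y := by
    simp [hxmax, WithBot.coe_inj]
  have h₂ : ¬ ∃ m ∈ x, y.max = (m : WithBot Ordinal) := by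
    simpa [hymax, WithBot.coe_inj] using hη
  simp only [ostar, h₁, h₂, if_false]

/-- `ostar` is symmetric on sets with maxima `ξ < η`. -/
theorem ostar_comm_of_lt {x y : Finset Ordinal} {ξ η : Ordinal} (hx : ξ ∈ x)
    (hxle : ∀ ζ ∈ x, ζ ≤ ξ) (hy : η ∈ y) (hyle : ∀ ζ ∈ y, ζ ≤ η) (hlt : ξ < η) :
    ostar y x = ostar x y := by
  have hxmax := Finset.max_eq_of_mem_of_forall_le hx hxle
  have hymax := Finset.max_eq_of_mem_of_forall_le hy hyle
  have hη : η ∉ x := fun h => absurd (hxle η h) (not_le.2 hlt)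
  have h₁ : (∃ m ∈ y, x.max = (m : WithBot Ordinal)) ↔ ξ ∈ y := by
    simp [hxmax, WithBot.coe_inj]
  have h₂ : ¬ ∃ m ∈ x, y.max = (m : WithBot Ordinal) := by
    simpa [hymax, WithBot.coe_inj] using hη
  simp only [ostar, h₁, h₂, if_false, Finset.inter_comm]

theorem ostar_subset_iff_of_lt {x y B : Finset Ordinal} {ξ η : Ordinal} (hx : ξ ∈ x)
    (hxle : ∀ ζ ∈ x, ζ ≤ ξ) (hy : η ∈ y) (hyle : ∀ ζ ∈ y, ζ ≤ η) (hlt : ξ < η) :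
    ostar x y ⊆ B ↔ ∀ ζ ∈ x, (ξ ∈ y ↔ ζ ∉ y) → ζ ∈ B := by
  rw [ostar_eq_of_lt hx hxle hy hyle hlt]
  by_cases h : ξ ∈ y <;> simp [h, Finset.subset_iff]

namespace PfCond

variable {f : Ordinal → Ordinal → Set Ordinal}

theorem star_cond_of_lt (s : PfCond f) {ξ η ζ : Ordinal} (hξ : ξ ∈ s.a) (hη : η ∈ s.a)
    (hlt : ξ < η) (hζ : ζ ∈ s.h ξ) (hiff : ξ ∈ s.h η ↔ ζ ∉ s.h η) :
    ∃ ν ∈ s.i ξ η, ζ ∈ s.h ν :=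
  Finset.mem_biUnion.1 <| (ostar_subset_iff_of_lt (s.h_mem ξ hξ) (s.h_le ξ hξ) (s.h_mem η hη)
    (s.h_le η hη) hlt).1 (s.star_cond ξ hξ η hη hlt.ne) ζ hζ hiff

/-- A condition only needs to be verified on increasing pairs. -/
def ofLt (hsymm : ∀ α β, f α β = f β α) (a : Finset Ordinal) (h : Ordinal → Finset Ordinal)
    (i : Ordinal → Ordinal → Finset Ordinal)
    (a_lt : ∀ ξ ∈ a, ξ < omega2) (h_sub : ∀ ξ ∈ a, h ξ ⊆ a) (h_mem : ∀ ξ ∈ a, ξ ∈ h ξ)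
    (h_le : ∀ ξ ∈ a, ∀ η ∈ h ξ, η ≤ ξ) (i_symm : ∀ ξ η, i ξ η = i η ξ)
    (i_sub : ∀ ξ ∈ a, ∀ η ∈ a, ξ < η → ∀ ν ∈ i ξ η, ν ∈ f ξ η ∧ ν ∈ a)
    (star : ∀ ξ ∈ a, ∀ η ∈ a, ξ < η → ∀ ζ ∈ h ξ, (ξ ∈ h η ↔ ζ ∉ h η) → ∃ ν ∈ i ξ η, ζ ∈ h ν) :
    PfCond f where
  a := a
  h := h
  i := i
  a_lt := a_lt
  h_sub := h_sub
  h_mem := h_mem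
  h_le := h_le
  i_symm := i_symm
  i_sub_f ξ hξ η hη hne ν hν := by
    rcases lt_or_gt_of_ne hne with hlt | hlt
    · exact (i_sub ξ hξ η hη hlt ν hν).1
    · rw [hsymm]
      exact (i_sub η hη ξ hξ hlt ν (i_symm ξ η ▸ hν)).1
  i_sub_a ξ hξ η hη hne ν hν := by
    rcases lt_or_gt_of_ne hne with hlt | hlt
    · exact (i_sub ξ hξ η hη hlt ν hν).2
    · exact (i_sub η hη ξ hξ hlt ν (i_symm ξ η ▸ hν)).2
  star_cond ξ hξ η hη hne := by
    have key : ∀ ξ ∈ a, ∀ η ∈ a, ξ < η → ostar (h ξ) (h η) ⊆ (i ξ η).biUnion h :=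
      fun ξ hξ η hη hlt => (ostar_subset_iff_of_lt (h_mem ξ hξ) (h_le ξ hξ) (h_mem η hη)
        (h_le η hη) hlt).2 fun ζ hζ hiff => Finset.mem_biUnion.2 (star ξ hξ η hη hlt ζ hζ hiff)
    rcases lt_or_gt_of_ne hne with hlt | hlt
    · exact key ξ hξ η hη hlt
    · rw [ostar_comm_of_lt (h_mem η hη) (h_le η hη) (h_mem ξ hξ) (h_le ξ hξ) hlt, i_symm]
      exact key η hη ξ hξ hlt

end PfCond

theorem stmt16
    (f : Ordinal → Ordinal → Set Ordinal)
    (hsymm : ∀ α β, f α β = f β α)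
    (hlt : ∀ α β γ, γ ∈ f α β → γ < α ∧ γ < β)
    (hcount : ∀ α β, (f α β).Countable)
    (s : PfCond f) (S E F Q : Finset Ordinal) (k : ℕ) (hk : 0 < k)
    (γ : ℕ → Ordinal) (γγ : ℕ → ℕ → Ordinal)
    (ha : s.a = S ∪ E ∪ F) (hQ : Q ⊆ S)
    (hSE : ∀ ξ ∈ S, ∀ η ∈ E, ξ < η) (hEF : ∀ η ∈ E, ∀ ζ ∈ F, η < ζ)
    (hγmono : ∀ i j, i < j → j < k → γ i < γ j)
    (hE : E = (Finset.range k).image γ)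
    (hF : F = ((Finset.range k) ×ˢ (Finset.range 2)).image fun x => γγ x.1 x.2)
    (hi : ∀ i < k, s.h (γγ i 0) ∩ s.h (γγ i 1) = (Q ∪ E).biUnion s.h)
    (hii : ∀ i < k, ∀ ξ ∈ S, f ξ (γ i) = f ξ (γγ i 0) ∧ f ξ (γ i) = f ξ (γγ i 1)) :
    ∃ r : PfCond f, r.a = S ∪ E ∧
      RestLe r r.a s S ∧
      RestLe r r.a s (Q ∪ E) ∧
      S \ (Q ∪ E).biUnion s.h ⊆ r.h (γ 0) ∧
      PrecRest s (S ∪ E) r := by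
  set U := (Q ∪ E).biUnion s.h with hU
  have hγE : ∀ j < k, γ j ∈ E := fun j hj => by
    rw [hE]; exact Finset.mem_image_of_mem γ (Finset.mem_range.2 hj)
  have hEγ : ∀ η ∈ E, ∃ j < k, γ j = η := fun η hη => by
    rw [hE] at hη; simpa using hη
  have hγγF : ∀ j < k, γγ j 0 ∈ F ∧ γγ j 1 ∈ F := fun j hj => by
    rw [hF]
    exact ⟨Finset.mem_image.2 ⟨(j, 0), by simp [hj], rfl⟩,
      Finset.mem_image.2 ⟨(j, 1), by simp [hj], rfl⟩⟩
  have hγ0 : ∀ η ∈ E, γ 0 ≤ η := fun η hη => by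
    obtain ⟨j, hj, rfl⟩ := hEγ η hη
    rcases Nat.eq_zero_or_pos j with rfl | hpos
    · exact le_rfl
    · exact (hγmono 0 j hpos hj).le
  have hSa : ∀ ξ ∈ S, ξ ∈ s.a := fun ξ h => by simp [ha, h]
  have hEa : ∀ ξ ∈ E, ξ ∈ s.a := fun ξ h => by simp [ha, h]
  have hFa : ∀ ξ ∈ F, ξ ∈ s.a := fun ξ h => by simp [ha, h]
  have hSEa : ∀ ξ ∈ S ∪ E, ξ ∈ s.a := fun ξ h => (Finset.mem_union.1 h).elim (hSa ξ) (hEa ξ)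
  have hS_E : ∀ ξ ∈ S, ξ ∉ E := fun ξ h h' => lt_irrefl _ (hSE ξ h ξ h')
  have hSF : ∀ ξ ∈ S, ∀ ζ ∈ F, ξ < ζ := fun ξ h ζ h' =>
    (hSE ξ h _ (hγE 0 hk)).trans (hEF _ (hγE 0 hk) ζ h')
  have below_S : ∀ ξ ∈ S, ∀ ν ∈ s.a, ν ≤ ξ → ν ∈ S := fun ξ hξ ν hν hle => by
    rw [ha, Finset.mem_union, Finset.mem_union] at hν
    rcases hν with (h | h) | h
    · exact h
    · exact absurd (hSE ξ hξ ν h) (not_lt.2 hle)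
    · exact absurd (hSF ξ hξ ν h) (not_lt.2 hle)
  have below_SE : ∀ ξ ∈ S ∪ E, ∀ ν ∈ s.a, ν ≤ ξ → ν ∈ S ∪ E := fun ξ hξ ν hν hle => by
    rcases Finset.mem_union.1 hξ with hξ | hξ
    · exact Finset.mem_union_left _ (below_S ξ hξ ν hν hle)
    · rw [ha, Finset.mem_union] at hν
      exact hν.resolve_right fun h => absurd (hEF ξ hξ ν h) (not_lt.2 hle)
  have hUE : ∀ η ∈ E, s.h η ⊆ U := fun η hη =>
    Finset.subset_biUnion_of_mem s.h (Finset.mem_union_right _ hη)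
  have hUQ : ∀ η ∈ Q, s.h η ⊆ U := fun η hη =>
    Finset.subset_biUnion_of_mem s.h (Finset.mem_union_left _ hη)
  have mem_U : ∀ j < k, ∀ ζ, ζ ∈ U ↔ ζ ∈ s.h (γγ j 0) ∧ ζ ∈ s.h (γγ j 1) := fun j hj ζ => by
    rw [← hi j hj, Finset.mem_inter]
  let H : Ordinal → Finset Ordinal := fun ξ =>
    s.h ξ ∪ if ξ ∈ E ∧ γ 0 ∈ s.h ξ then S \ U else ∅
  let X : Ordinal → Ordinal → Finset Ordinal := fun ξ η =>
    if ξ ∈ S \ Q then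
      {j ∈ Finset.range k | γ j = η}.biUnion fun j => s.i ξ (γγ j 0) ∪ s.i ξ (γγ j 1)
    else ∅
  let I : Ordinal → Ordinal → Finset Ordinal := fun ξ η => s.i ξ η ∪ (X ξ η ∪ X η ξ)
  have mem_H : ∀ ξ ζ, ζ ∈ H ξ ↔ ζ ∈ s.h ξ ∨ (ξ ∈ E ∧ γ 0 ∈ s.h ξ) ∧ ζ ∈ S ∧ ζ ∉ U := by
    intro ξ ζ
    by_cases h : ξ ∈ E ∧ γ 0 ∈ s.h ξ <;> simp [H, h]
  have mem_X : ∀ ξ η ν, ν ∈ X ξ η ↔ (ξ ∈ S ∧ ξ ∉ Q) ∧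
      ∃ j < k, γ j = η ∧ (ν ∈ s.i ξ (γγ j 0) ∨ ν ∈ s.i ξ (γγ j 1)) := by
    intro ξ η ν
    by_cases h : ξ ∈ S ∧ ξ ∉ Q <;> simp [X, h, and_assoc]
  have mem_I : ∀ ξ η ν, ν ∈ I ξ η ↔ ν ∈ s.i ξ η ∨ ν ∈ X ξ η ∨ ν ∈ X η ξ := by
    intro ξ η ν
    simp [I]
  have H_S : ∀ ξ ∈ S, H ξ = s.h ξ := fun ξ hξ => by
    ext ζ; simp [mem_H, hS_E ξ hξ]
  have sub_H : ∀ ξ, s.h ξ ⊆ H ξ := fun ξ ζ hζ => (mem_H ξ ζ).2 (Or.inl hζ)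
  have X_notE : ∀ ξ η, η ∉ E → X ξ η = ∅ := fun ξ η hη => by
    ext ν
    simp only [mem_X, Finset.notMem_empty, iff_false]
    rintro ⟨-, j, hj, rfl, -⟩
    exact hη (hγE j hj)
  have X_notS : ∀ ξ η, (ξ ∈ S → ξ ∈ Q) → X ξ η = ∅ := fun ξ η hξ => by
    ext ν
    simp only [mem_X, Finset.notMem_empty, iff_false]
    rintro ⟨⟨h, h'⟩, -⟩
    exact h' (hξ h)
  have sub_I : ∀ ξ η, s.i ξ η ⊆ I ξ η := fun ξ η ν hν => (mem_I ξ η ν).2 (Or.inl hν)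
  have I_S : ∀ ξ ∈ S, ∀ η ∈ S, I ξ η = s.i ξ η := fun ξ hξ η hη => by
    simp [I, X_notE _ _ (hS_E ξ hξ), X_notE _ _ (hS_E η hη)]
  have I_QE : ∀ ξ ∈ Q ∪ E, ∀ η ∈ Q ∪ E, I ξ η = s.i ξ η := by
    have h : ∀ ξ ∈ Q ∪ E, ξ ∈ S → ξ ∈ Q := fun ξ hξ hξS =>
      (Finset.mem_union.1 hξ).resolve_right (hS_E ξ hξS)
    intro ξ hξ η hη
    simp [I, X_notS _ _ (h ξ hξ), X_notS _ _ (h η hη)]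
  have I_sub : ∀ ξ ∈ S ∪ E, ∀ η ∈ S ∪ E, ξ < η → ∀ ν ∈ I ξ η, ν ∈ f ξ η ∧ ν ∈ S ∪ E := by
    intro ξ hξ η hη hlt' ν hν
    have hfa : ν ∈ f ξ η ∧ ν ∈ s.a := by
      rcases (mem_I ξ η ν).1 hν with h | h | h
      · exact ⟨s.i_sub_f ξ (hSEa ξ hξ) η (hSEa η hη) hlt'.ne ν h,
          s.i_sub_a ξ (hSEa ξ hξ) η (hSEa η hη) hlt'.ne h⟩
      · obtain ⟨⟨hξS, -⟩, j, hj, rfl, h | h⟩ := (mem_X ξ η ν).1 h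
        · have hF' := (hγγF j hj).1
          rw [(hii j hj ξ hξS).1]
          exact ⟨s.i_sub_f ξ (hSa ξ hξS) _ (hFa _ hF') (hSF ξ hξS _ hF').ne ν h,
            s.i_sub_a ξ (hSa ξ hξS) _ (hFa _ hF') (hSF ξ hξS _ hF').ne h⟩
        · have hF' := (hγγF j hj).2
          rw [(hii j hj ξ hξS).2]
          exact ⟨s.i_sub_f ξ (hSa ξ hξS) _ (hFa _ hF') (hSF ξ hξS _ hF').ne ν h,
            s.i_sub_a ξ (hSa ξ hξS) _ (hFa _ hF') (hSF ξ hξS _ hF').ne h⟩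
      · obtain ⟨⟨hηS, -⟩, j, hj, rfl, -⟩ := (mem_X η ξ ν).1 h
        exact absurd (hSE η hηS _ (hγE j hj)) (not_lt.2 hlt'.le)
    exact ⟨hfa.1, below_SE ξ hξ ν hfa.2 (hlt _ _ _ hfa.1).1.le⟩
  -- A witness for the star condition of `s` is also one for `H` and `I`.
  have lift : ∀ ξ ∈ S ∪ E, ∀ η ∈ S ∪ E, ξ < η → ∀ ζ ∈ s.h ξ, (ξ ∈ s.h η ↔ ζ ∉ s.h η) →
      ∃ ν ∈ I ξ η, ζ ∈ H ν := fun ξ hξ η hη hlt' ζ hζ hiff => by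
    obtain ⟨ν, hν, hζν⟩ := s.star_cond_of_lt (hSEa ξ hξ) (hSEa η hη) hlt' hζ hiff
    exact ⟨ν, sub_I _ _ hν, sub_H _ hζν⟩
  have star_EE : ∀ ξ ∈ E, ∀ η ∈ E, ξ < η → ∀ ζ ∈ H ξ, (ξ ∈ H η ↔ ζ ∉ H η) →
      ∃ ν ∈ I ξ η, ζ ∈ H ν := by
    intro ξ hξ η hη hlt' ζ hζ hiff
    have hξη : ξ ∈ H η ↔ ξ ∈ s.h η := by
      rw [mem_H, or_iff_left fun h => hS_E ξ h.2.1 hξ]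
    rw [hξη] at hiff
    rcases (mem_H ξ ζ).1 hζ with h | ⟨⟨-, h0⟩, hζD⟩
    · refine lift ξ (Finset.mem_union_right _ hξ) η (Finset.mem_union_right _ hη) hlt' ζ h ?_
      rw [hiff, mem_H, or_iff_left fun h' => h'.2.2 (hUE ξ hξ h)]
    · have hζη : ζ ∈ H η ↔ γ 0 ∈ s.h η := by
        rw [mem_H, or_iff_right fun h => hζD.2 (hUE η hη h)]
        simp [hη, hζD]
      rw [hζη] at hiff
      obtain ⟨ν, hν, h0ν⟩ := s.star_cond_of_lt (hEa ξ hξ) (hEa η hη) hlt' h0 hiff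
      have hνa := s.i_sub_a ξ (hEa ξ hξ) η (hEa η hη) hlt'.ne hν
      have hνSE := (I_sub ξ (Finset.mem_union_right _ hξ) η (Finset.mem_union_right _ hη) hlt' ν
        (sub_I _ _ hν)).2
      have hνE : ν ∈ E := (Finset.mem_union.1 hνSE).resolve_left fun h =>
        absurd (hSE ν h _ (hγE 0 hk)) (not_lt.2 (s.h_le ν hνa _ h0ν))
      exact ⟨ν, sub_I _ _ hν, (mem_H ν ζ).2 (Or.inr ⟨⟨hνE, h0ν⟩, hζD⟩)⟩
  have star_SE : ∀ ξ ∈ S, ∀ η ∈ E, ∀ ζ ∈ s.h ξ, (ξ ∈ H η ↔ ζ ∉ H η) →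
      ∃ ν ∈ I ξ η, ζ ∈ H ν := by
    intro ξ hξ η hη ζ hζ hiff
    have hlift := lift ξ (Finset.mem_union_left _ hξ) η (Finset.mem_union_right _ hη)
      (hSE ξ hξ η hη) ζ hζ
    have hζS : ζ ∈ S := below_S ξ hξ ζ (s.h_sub ξ (hSa ξ hξ) hζ) (s.h_le ξ (hSa ξ hξ) ζ hζ)
    by_cases hξζ : ξ ∈ s.h η ↔ ζ ∉ s.h η
    · exact hlift hξζ
    have h0 : γ 0 ∈ s.h η := by
      by_contra h0
      refine hξζ ?_
      simpa [mem_H, h0] using hiff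
    have mem_Hη : ∀ ρ ∈ S, ρ ∈ H η ↔ ρ ∈ s.h η ∨ ρ ∉ U := fun ρ hρ => by
      simp [mem_H, hη, h0, hρ]
    rw [mem_Hη ξ hξ, mem_Hη ζ hζS] at hiff
    have hUξ := @hUE η hη ξ
    have hUζ := @hUE η hη ζ
    -- Exactly one of `ξ` and `ζ` lies outside `U`.
    have hξU : ξ ∈ U ↔ ζ ∉ U := by
      clear * - hiff hξζ hUξ hUζ
      tauto
    have hξQ : ξ ∉ Q := fun hq => hξU.1 (hUQ ξ hq (s.h_mem ξ (hSa ξ hξ))) (hUQ ξ hq hζ)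
    obtain ⟨j, hj, rfl⟩ := hEγ η hη
    have hUj := mem_U j hj
    have hcases : (ξ ∈ s.h (γγ j 0) ↔ ζ ∉ s.h (γγ j 0)) ∨
        (ξ ∈ s.h (γγ j 1) ↔ ζ ∉ s.h (γγ j 1)) := by
      rw [hUj ξ, hUj ζ] at hξU
      clear * - hξU
      tauto
    have wit : ∀ ν, (ν ∈ s.i ξ (γγ j 0) ∨ ν ∈ s.i ξ (γγ j 1)) → ν ∈ I ξ (γ j) := fun ν hν =>
      (mem_I _ _ _).2 (Or.inr (Or.inl ((mem_X _ _ _).2 ⟨⟨hξ, hξQ⟩, j, hj, rfl, hν⟩)))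
    rcases hcases with h | h
    · have hF' := (hγγF j hj).1
      obtain ⟨ν, hν, hζν⟩ := s.star_cond_of_lt (hSa ξ hξ) (hFa _ hF') (hSF ξ hξ _ hF') hζ h
      exact ⟨ν, wit ν (Or.inl hν), sub_H _ hζν⟩
    · have hF' := (hγγF j hj).2
      obtain ⟨ν, hν, hζν⟩ := s.star_cond_of_lt (hSa ξ hξ) (hFa _ hF') (hSF ξ hξ _ hF') hζ h
      exact ⟨ν, wit ν (Or.inr hν), sub_H _ hζν⟩
  let r : PfCond f := PfCond.ofLt hsymm (S ∪ E) H I (fun ξ hξ => s.a_lt ξ (hSEa ξ hξ))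
    (fun ξ hξ ζ hζ => by
      rcases (mem_H ξ ζ).1 hζ with h | h
      · exact below_SE ξ hξ ζ (s.h_sub ξ (hSEa ξ hξ) h) (s.h_le ξ (hSEa ξ hξ) ζ h)
      · exact Finset.mem_union_left _ h.2.1)
    (fun ξ hξ => sub_H ξ (s.h_mem ξ (hSEa ξ hξ)))
    (fun ξ hξ ζ hζ => by
      rcases (mem_H ξ ζ).1 hζ with h | h
      · exact s.h_le ξ (hSEa ξ hξ) ζ h
      · exact (hSE ζ h.2.1 ξ h.1.1).le)
    (fun ξ η => by simp only [I, s.i_symm ξ η, Finset.union_comm (X ξ η)])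
    I_sub
    (fun ξ hξ η hη hlt' ζ hζ hiff => by
      rcases Finset.mem_union.1 hξ with hξ' | hξ'
      · rw [H_S ξ hξ'] at hζ
        rcases Finset.mem_union.1 hη with hη' | hη'
        · rw [H_S η hη'] at hiff
          exact lift ξ hξ η hη hlt' ζ hζ hiff
        · exact star_SE ξ hξ' η hη' ζ hζ hiff
      · rcases Finset.mem_union.1 hη with hη' | hη'
        · exact absurd (hSE η hη' ξ hξ') (not_lt.2 hlt'.le)
        · exact star_EE ξ hξ' η hη' hlt' ζ hζ hiff)
  refine ⟨r, rfl, ⟨Finset.subset_union_left, fun ξ hξ => ?_, fun ξ hξ η hη _ => I_S ξ hξ η hη⟩,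
    ⟨Finset.union_subset_union_left hQ, fun ξ hξ => ?_, fun ξ hξ η hη _ => I_QE ξ hξ η hη⟩,
    fun ζ hζ => ?_, rfl, fun α hα c hc ζ hζ => ?_⟩
  · exact congrArg (· ∩ S) (H_S ξ hξ)
  · ext ζ
    change ζ ∈ H ξ ∩ (Q ∪ E) ↔ _
    rw [Finset.mem_inter, Finset.mem_inter, mem_H]
    refine and_congr_left fun hζ => or_iff_left fun h => h.2.2 ?_
    have hζa : ζ ∈ s.a := hSEa ζ (Finset.union_subset_union_left hQ hζ)
    exact Finset.mem_biUnion.2 ⟨ζ, hζ, s.h_mem ζ hζa⟩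
  · exact (mem_H _ _).2 (Or.inr ⟨⟨hγE 0 hk, s.h_mem _ (hEa _ (hγE 0 hk))⟩,
      Finset.mem_sdiff.1 hζ⟩)
  · rw [Finset.mem_sdiff, Finset.mem_inter] at hζ
    obtain ⟨⟨hζα, hζSE⟩, hζc⟩ := hζ
    refine Finset.mem_sdiff.2 ⟨sub_H α hζα, fun hmem => hζc ?_⟩
    obtain ⟨ν, hν, hζν⟩ := Finset.mem_biUnion.1 hmem
    refine Finset.mem_biUnion.2 ⟨ν, hν, Finset.mem_inter.2 ⟨?_, hζSE⟩⟩
    refine ((mem_H ν ζ).1 hζν).resolve_right fun h => ?_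
    rcases Finset.mem_union.1 hα with hα' | hα'
    · exact absurd (hSE α hα' ν h.1.1) (not_lt.2 (hc ν hν).2.le)
    · exact h.2.2 (hUE α hα' hζα)
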